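/- There is a constant c such that for all integers k ≥ 1 and m ≥ 2 the following holds. Let n = 2m⌈log₂ m⌉ be the input length of PJ_{2k−1,m} and N = n(⌈log₂ n⌉+1). Then there exists a total Boolean function g : {0,1}^N → {0,1} that agrees with the partial function ord(PJ_{2k−1,m}) on its domain and is representable by a deterministic 2kOBDD of width at most c·m²·n; in particular the width is O(N³). -/

import Mathlib

set_option maxHeartbeats 1000000
/-- `binVal l a = Σ_{j=1}^l a_j 2^{l-j}` (a₁ is the most significant bit). -/
def binVal (l : ℕ) (a : Fin l → Bool) : ℕ :=
  ∑ j : Fin l, if a j then 2 ^ (l - 1 - (j : ℕ)) else 0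
/-- A deterministic kOBDD of width `w` over `n` variables: `k` layers reading in order `ord`. -/
structure KOBDD (k n w : ℕ) where
  ord : Equiv.Perm (Fin n)
  tr : Fin k → Fin n → Fin w → Bool → Fin w
  start : Fin w
  acc : Finset (Fin w)

namespace KOBDD

def layerRun {k n w : ℕ} (M : KOBDD k n w) (t : Fin k) (s : Fin w) (x : Fin n → Bool) : Fin w :=
  (List.finRange n).foldl (fun a i => M.tr t i a (x (M.ord i))) s

def final {k n w : ℕ} (M : KOBDD k n w) (x : Fin n → Bool) : Fin w :=
  (List.finRange k).foldl (fun s t => M.layerRun t s x) M.start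

def Accepts {k n w : ℕ} (M : KOBDD k n w) (x : Fin n → Bool) : Prop :=
  M.final x ∈ M.acc

def Represents {k n w : ℕ} (M : KOBDD k n w) (f : (Fin n → Bool) → Bool) : Prop :=
  ∀ x, M.Accepts x ↔ f x = true

def RepresentsPartial {k n w : ℕ} (M : KOBDD k n w) (F : (Fin n → Bool) → Option Bool) : Prop :=
  ∀ x b, F x = some b → (M.Accepts x ↔ b = true)

/-- Each layer is a commutative OBDD: for every reading order `π`, the reordered layer
(with transitions `tr' i = tr (ord⁻¹(π i))`) computes, from every start state,
the same state transformation as the original layer. -/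
def Commutative {k n w : ℕ} (M : KOBDD k n w) : Prop :=
  ∀ (π : Equiv.Perm (Fin n)) (t : Fin k) (s : Fin w) (x : Fin n → Bool),
    (List.finRange n).foldl (fun a i => M.tr t (M.ord.symm (π i)) a (x (π i))) s =
      M.layerRun t s x

end KOBDD
lemma zIdx {q l : ℕ} (i : Fin q) (j : Fin l) : (i : ℕ) * l + (j : ℕ) < q * (l + 1) :=
  calc (i : ℕ) * l + (j : ℕ) < (i : ℕ) * l + l := Nat.add_lt_add_left j.isLt _
    _ = ((i : ℕ) + 1) * l := by ring
    _ ≤ q * l := Nat.mul_le_mul i.isLt (Nat.le_refl l)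
    _ ≤ q * (l + 1) := Nat.mul_le_mul (Nat.le_refl q) (Nat.le_succ l)

lemma yIdx {q l : ℕ} (i : Fin q) : q * l + (i : ℕ) < q * (l + 1) :=
  calc q * l + (i : ℕ) < q * l + q := Nat.add_lt_add_left i.isLt _
    _ = q * (l + 1) := by ring

/-- The bit `z_{i,j}` of an input to the reordered function
(layout: `z_{1,1},…,z_{q,l}, y_1,…,y_q`). -/
def zOf (q l : ℕ) (x : Fin (q * (l + 1)) → Bool) (i : Fin q) (j : Fin l) : Bool :=
  x ⟨(i : ℕ) * l + (j : ℕ), zIdx i j⟩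

/-- The value bit `y_i` of an input to the reordered function. -/
def yOf (q l : ℕ) (x : Fin (q * (l + 1)) → Bool) (i : Fin q) : Bool :=
  x ⟨q * l + (i : ℕ), yIdx i⟩

/-- `z_{1,j} ⊕ ⋯ ⊕ z_{i,j}`. -/
def xorZ (q l : ℕ) (x : Fin (q * (l + 1)) → Bool) (i : Fin q) (j : Fin l) : Bool :=
  decide ((Finset.univ.filter (fun i' : Fin q => i' ≤ i ∧ zOf q l x i' j = true)).card % 2 = 1)

/-- `θ(i) − 1` for the plain reordering. -/
def addrOrd (q l : ℕ) (x : Fin (q * (l + 1)) → Bool) (i : Fin q) : ℕ :=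
  binVal l (zOf q l x i)

/-- `θ(i) − 1` for the xor-reordering. -/
def addrXor (q l : ℕ) (x : Fin (q * (l + 1)) → Bool) (i : Fin q) : ℕ :=
  binVal l (xorZ q l x i)

/-- The partial reordered function: defined exactly when the addresses form a
permutation of `{1,…,q}`; then position `j` of `f`'s argument is `y_{θ⁻¹(j)}`. -/
noncomputable def ordPartial (q l : ℕ) (f : (Fin q → Bool) → Bool)
    (addr : (Fin (q * (l + 1)) → Bool) → Fin q → ℕ) :
    (Fin (q * (l + 1)) → Bool) → Option Bool := fun x =>
  if h : ∃ σ : Equiv.Perm (Fin q), ∀ i, addr x i = (σ i : ℕ) then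
    some (f fun j => yOf q l x (h.choose.symm j))
  else none

/-- The partial function `ord(f)`. -/
noncomputable def ordF (q : ℕ) (f : (Fin q → Bool) → Bool) :
    (Fin (q * (Nat.clog 2 q + 1)) → Bool) → Option Bool :=
  ordPartial q (Nat.clog 2 q) f (addrOrd q (Nat.clog 2 q))

/-- The partial function `⊕ord(f)`. -/
noncomputable def xorOrdF (q : ℕ) (f : (Fin q → Bool) → Bool) :
    (Fin (q * (Nat.clog 2 q + 1)) → Bool) → Option Bool :=
  ordPartial q (Nat.clog 2 q) f (addrXor q (Nat.clog 2 q))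
lemma blockIdx {m l b : ℕ} (hb : b < 2 * m) (j : Fin l) : b * l + (j : ℕ) < 2 * m * l :=
  calc b * l + (j : ℕ) < b * l + l := Nat.add_lt_add_left j.isLt _
    _ = (b + 1) * l := by ring
    _ ≤ 2 * m * l := Nat.mul_le_mul hb (Nat.le_refl l)

/-- Index of the block encoding `f^A(v)` (`side = false`) or `f^B(v)` (`side = true`). -/
def pjBlock (m : ℕ) (side : Bool) (v : ℕ) : ℕ :=
  cond side (m + v % m) (v % m)

lemma pjBlock_lt {m : ℕ} (hm : 0 < m) (side : Bool) (v : ℕ) : pjBlock m side v < 2 * m := by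
  have h := Nat.mod_lt v hm
  cases side with
  | false => exact lt_of_lt_of_le h (by omega)
  | true => exact lt_of_lt_of_eq (Nat.add_lt_add_left h m) (two_mul m).symm

/-- The value `f^A(v)` (`side = false`) or `f^B(v)` (`side = true`) encoded in the input. -/
def pjF (m : ℕ) (hm : 0 < m) (x : Fin (2 * m * Nat.clog 2 m) → Bool)
    (side : Bool) (v : ℕ) : ℕ :=
  binVal (Nat.clog 2 m) (fun j =>
    x ⟨pjBlock m side v * Nat.clog 2 m + (j : ℕ), blockIdx (pjBlock_lt hm side v) j⟩) % m

/-- `v_j`: `v_0 = 0`, `v_{j+1} = f^A(v_j)` for even `j`, `v_{j+1} = f^B(v_j)` for odd `j`. -/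
def pjV (m : ℕ) (hm : 0 < m) (x : Fin (2 * m * Nat.clog 2 m) → Bool) : ℕ → ℕ
  | 0 => 0
  | j + 1 => pjF m hm x (decide (j % 2 = 1)) (pjV m hm x j)

/-- The pointer jumping function `PJ_{k,m}`: the parity of the bits of `v_k`. -/
def PJ (k m : ℕ) (hm : 0 < m) (x : Fin (2 * m * Nat.clog 2 m) → Bool) : Bool :=
  decide ((Nat.digits 2 (pjV m hm x k)).sum % 2 = 1)

/-!
`PJ_{j,m}` has a commutative `jOBDD` of width `2m²`: a layer holds the current pointer fixed and
adds up modulo `m` the place values of the ones in the block it points to, an order-independent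
sum. A commutative `kOBDD` `M` of width `d` for `f` yields one of width `d·2^L` for a total
extension of `ord(f)`: read `z_{i,1}, …, z_{i,L}, y_i` for `i = 1, …, q`, collect the address `θ(i)`
in a register of `L` bits, and on reading `y_i` let `M` read its variable number `θ(i)`. If the
addresses form a permutation, then each layer of `M` reads every variable of `f` exactly once.
-/

theorem foldl_finRange_mul {S : Type*} {a b : ℕ} (f : S → Fin (a * b) → S) (s : S) :
    (List.finRange (a * b)).foldl f s =
      (List.finRange a).foldl
        (fun s i => (List.finRange b).foldl (fun s j => f s (finProdFinEquiv (i, j))) s) s := by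
  have blocks : List.finRange (a * b) =
      ((List.finRange a).map fun i =>
        (List.finRange b).map fun j => finProdFinEquiv (i, j)).flatten := by
    rw [← List.ofFn_id, List.ofFn_mul]
    simp only [List.ofFn_eq_map]
    congr 1
    refine List.map_congr_left fun i _ => List.map_congr_left fun j _ => Fin.ext ?_
    simp [add_comm, mul_comm]
  rw [blocks, List.foldl_flatten, List.foldl_map]
  simp only [List.foldl_map]

theorem two_pow_clog_le {n : ℕ} (hn : 1 < n) : 2 ^ Nat.clog 2 n ≤ 2 * n :=
  calc 2 ^ Nat.clog 2 n = 2 * 2 ^ (Nat.clog 2 n - 1) :=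
        (mul_pow_sub_one (Nat.clog_pos one_lt_two hn).ne' 2).symm
    _ ≤ 2 * n := Nat.mul_le_mul_left 2 (Nat.pow_pred_clog_lt_self one_lt_two hn).le

theorem binVal_succ (l : ℕ) (a : Fin (l + 1) → Bool) :
    binVal (l + 1) a = 2 * binVal l (fun j => a j.castSucc) + (a (Fin.last l)).toNat := by
  have shift (j : Fin l) : l - (j : ℕ) = l - 1 - j + 1 := by omega
  simp [binVal, Fin.sum_univ_castSucc, Finset.mul_sum, shift, pow_succ', Bool.toNat,
    Bool.cond_eq_ite]

theorem binVal_lt (l : ℕ) (a : Fin l → Bool) : binVal l a < 2 ^ l := by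
  induction l with
  | zero => simp [binVal]
  | succ l ih =>
    have := ih fun j => a j.castSucc
    have := (a (Fin.last l)).toNat_lt
    rw [binVal_succ, pow_succ]
    omega

theorem foldl_two_mul_add_eq_binVal {R : Type*} [Semiring R] (l : ℕ) (a : Fin l → Bool) :
    (List.finRange l).foldl (fun (r : R) j => 2 * r + (a j).toNat) 0 = binVal l a := by
  induction l with
  | zero => simp [binVal]
  | succ l ih =>
    simp [List.finRange_succ_last, List.foldl_map, binVal_succ, ih fun j => a j.castSucc]

namespace KOBDD

variable {k n w : ℕ} {S : Type*}

/-- The `KOBDD` given by a layered program whose states form an arbitrary type `S`; the bijection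
`e` numbers the states. -/
def ofEquiv (e : S ≃ Fin w) (π : Equiv.Perm (Fin n)) (tr : Fin k → Fin n → S → Bool → S)
    (s₀ : S) (A : Finset S) : KOBDD k n w where
  ord := π
  tr t i s b := e (tr t i (e.symm s) b)
  start := e s₀
  acc := A.map e.toEmbedding

theorem ofEquiv_accepts (e : S ≃ Fin w) (π : Equiv.Perm (Fin n))
    (tr : Fin k → Fin n → S → Bool → S) (s₀ : S) (A : Finset S) (x : Fin n → Bool) :
    (ofEquiv e π tr s₀ A).Accepts x ↔
      (List.finRange k).foldl
        (fun s t => (List.finRange n).foldl (fun s i => tr t i s (x (π i))) s) s₀ ∈ A := by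
  have final_eq : (ofEquiv e π tr s₀ A).final x = e ((List.finRange k).foldl
      (fun s t => (List.finRange n).foldl (fun s i => tr t i s (x (π i))) s) s₀) :=
    List.foldl_hom e fun s t => List.foldl_hom e fun s i => by simp [ofEquiv]
  rw [Accepts, final_eq]
  simp [ofEquiv]

theorem commutative_of_tr_comm {M : KOBDD k n w}
    (h : ∀ (t : Fin k) (i i' : Fin n) (s : Fin w) (b b' : Bool), i ≠ i' →
      M.tr t i' (M.tr t i s b) b' = M.tr t i (M.tr t i' s b') b) :
    M.Commutative := by
  intro π t s x
  let read (s : Fin w) (v : Fin n) : Fin w := M.tr t (M.ord.symm v) s (x v)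
  have read_comm (u v : Fin n) (s : Fin w) : read (read s u) v = read (read s v) u := by
    by_cases huv : u = v
    · rw [huv]
    · exact h t _ _ s _ _ (M.ord.symm.injective.ne huv)
  calc (List.finRange n).foldl (fun s i => read s (π i)) s
      = ((List.finRange n).map π).foldl read s := List.foldl_map.symm
    _ = ((List.finRange n).map M.ord).foldl read s :=
        (π.map_finRange_perm.trans M.ord.map_finRange_perm.symm).foldl_eq'
          (fun u _ v _ => read_comm u v) s
    _ = M.layerRun t s x := by simp [List.foldl_map, layerRun, read]

/-- The `KOBDD` that runs `M` and then `r` idle layers. -/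
def pad (M : KOBDD k n w) (r : ℕ) : KOBDD (k + r) n w where
  ord := M.ord
  tr := Fin.addCases M.tr fun _ _ s _ => s
  start := M.start
  acc := M.acc

theorem pad_final (M : KOBDD k n w) (r : ℕ) (x : Fin n → Bool) : (M.pad r).final x = M.final x := by
  have finRange_add : List.finRange (k + r) =
      (List.finRange k).map (Fin.castAdd r) ++ (List.finRange r).map (Fin.natAdd k) := by
    simp only [← List.ofFn_eq_map, ← List.ofFn_id (k + r), List.ofFn_add]
    rfl
  simp [final, finRange_add, List.foldl_map, layerRun, pad]

theorem RepresentsPartial.pad {M : KOBDD k n w} {F : (Fin n → Bool) → Option Bool}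
    (h : M.RepresentsPartial F) (r : ℕ) : (M.pad r).RepresentsPartial F := by
  intro x b hx
  rw [Accepts, pad_final]
  exact h x b hx

theorem RepresentsPartial.exists_represents {M : KOBDD k n w} {F : (Fin n → Bool) → Option Bool}
    (h : M.RepresentsPartial F) :
    ∃ g : (Fin n → Bool) → Bool, (∀ x b, F x = some b → g x = b) ∧ M.Represents g := by
  classical
  refine ⟨fun x => decide (M.Accepts x), fun x b hx => ?_, fun x => decide_eq_true_iff.symm⟩
  rw [Bool.eq_iff_iff, decide_eq_true_iff, h x b hx]

end KOBDD

section Reorder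

variable {k q d L : ℕ}

/-- The reading order `z_{1,1}, …, z_{1,L}, y_1, z_{2,1}, …, z_{2,L}, y_2, …` on the inputs of a
reordered function, as a map from the pair of an index `i` and a time `j ≤ L` within its block. -/
def interleave (q L : ℕ) : Fin q × Fin (L + 1) ≃ Fin (q * (L + 1)) :=
  ((Equiv.refl _).prodCongr finSumFinEquiv.symm).trans <|
    (Equiv.prodSumDistrib _ _ _).trans <|
      (finProdFinEquiv.sumCongr (Equiv.prodUnique _ (Fin 1))).trans <|
        finSumFinEquiv.trans (finCongr (Nat.mul_succ q L).symm)

theorem interleave_castSucc (i : Fin q) (j : Fin L) :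
    interleave q L (i, j.castSucc) = ⟨i * L + j, zIdx i j⟩ := by
  ext
  have symm_castSucc : finSumFinEquiv.symm j.castSucc = Sum.inl j :=
    finSumFinEquiv_symm_apply_castAdd j
  calc (interleave q L (i, j.castSucc) : ℕ)
      = finSumFinEquiv (m := q * L) (n := q) (.inl (finProdFinEquiv (i, j))) := by
        simp [interleave, symm_castSucc, -finSumFinEquiv_apply_left]
    _ = i * L + j := by simp [add_comm, mul_comm]

theorem interleave_last (i : Fin q) :
    interleave q L (i, Fin.last L) = ⟨q * L + i, yIdx i⟩ := by
  ext
  calc (interleave q L (i, Fin.last L) : ℕ)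
      = finSumFinEquiv (m := q * L) (n := q) (.inr i) := by
        simp [interleave, -finSumFinEquiv_apply_right]
    _ = q * L + i := by simp

namespace KOBDD

/-- One step of the program for the reordered function: at a time `j < L` an address bit is shifted
into the register, which is a residue modulo `2 ^ L`; at time `L` the program `M` reads its variable
whose number is in the register. Registers `≥ q`, which point to no variable, are ignored. -/
def reorderStep (M : KOBDD k q d) (t : Fin k) (j : Fin (L + 1)) (s : Fin d × ZMod (2 ^ L))
    (b : Bool) : Fin d × ZMod (2 ^ L) :=
  if j = Fin.last L then
    (if h : s.2.val < q then M.tr t (M.ord.symm ⟨s.2.val, h⟩) s.1 b else s.1, 0)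
  else (s.1, 2 * s.2 + b.toNat)

/-- The `KOBDD` for the reordered function of the one represented by `M`, with `L`-bit addresses. -/
noncomputable def reorder (M : KOBDD k q d) (L : ℕ) : KOBDD k (q * (L + 1)) (d * 2 ^ L) :=
  ofEquiv (Fintype.equivFinOfCardEq (by simp : Fintype.card (Fin d × ZMod (2 ^ L)) = d * 2 ^ L))
    (finProdFinEquiv.symm.trans (interleave q L))
    (fun t p => M.reorderStep t (finProdFinEquiv.symm p).2) (M.start, 0) (M.acc ×ˢ Finset.univ)

variable (M : KOBDD k q d)

theorem foldl_reorderStep_address (x : Fin (q * (L + 1)) → Bool) (t : Fin k) (i : Fin q)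
    (s : Fin d) :
    (List.finRange L).foldl
      (fun s j => M.reorderStep t j.castSucc s (x (interleave q L (i, j.castSucc)))) (s, 0) =
      (s, (addrOrd q L x i : ZMod (2 ^ L))) := by
  have shift (r : ZMod (2 ^ L)) (j : Fin L) :
      M.reorderStep t j.castSucc (s, r) (x (interleave q L (i, j.castSucc))) =
        (s, 2 * r + (zOf q L x i j).toNat) := by
    rw [interleave_castSucc, reorderStep, if_neg j.castSucc_ne_last, zOf]
  rw [List.foldl_hom (Prod.mk s) shift, foldl_two_mul_add_eq_binVal, addrOrd]

variable {x : Fin (q * (L + 1)) → Bool} {σ : Equiv.Perm (Fin q)}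

theorem foldl_reorderStep_block (hσ : ∀ i, addrOrd q L x i = σ i) (t : Fin k) (i : Fin q)
    (s : Fin d) :
    (List.finRange (L + 1)).foldl
      (fun s j => M.reorderStep t j s (x (interleave q L (i, j)))) (s, 0) =
      (M.tr t (M.ord.symm (σ i)) s (yOf q L x i), 0) := by
  have register_val : (addrOrd q L x i : ZMod (2 ^ L)).val = σ i := by
    rw [ZMod.val_natCast_of_lt (show addrOrd q L x i < 2 ^ L from binVal_lt L _), hσ]
  rw [List.finRange_succ_last, List.foldl_append, List.foldl_map, foldl_reorderStep_address]
  simp [interleave_last, reorderStep, register_val, yOf]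

variable {M}

theorem Commutative.foldl_reorderStep (hM : M.Commutative) (hσ : ∀ i, addrOrd q L x i = σ i)
    (t : Fin k) (s : Fin d) :
    (List.finRange (q * (L + 1))).foldl (fun s p => M.reorderStep t (finProdFinEquiv.symm p).2 s
        (x (interleave q L (finProdFinEquiv.symm p)))) (s, 0) =
      (M.layerRun t s fun j => yOf q L x (σ.symm j), 0) := by
  rw [foldl_finRange_mul]
  simp only [Equiv.symm_apply_apply]
  rw [List.foldl_hom (·, 0) fun s i => M.foldl_reorderStep_block hσ t i s, ← hM σ]
  simp

theorem Commutative.reorder_representsPartial (hM : M.Commutative) {f : (Fin q → Bool) → Bool}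
    (hf : M.Represents f) (L : ℕ) :
    (M.reorder L).RepresentsPartial (ordPartial q L f (addrOrd q L)) := by
  intro x b hx
  rw [ordPartial] at hx
  split_ifs at hx with h
  have hσ := h.choose_spec
  generalize h.choose = σ at hσ hx
  rw [reorder, ofEquiv_accepts, ← Option.some.inj hx, ← hf]
  simp only [Equiv.trans_apply]
  rw [List.foldl_hom (·, 0) fun s t => hM.foldl_reorderStep hσ t s]
  simp [Accepts, final]

end KOBDD

end Reorder

section PointerJumping

theorem pjV_lt {m : ℕ} (hm : 0 < m) (x : Fin (2 * m * Nat.clog 2 m) → Bool) (j : ℕ) :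
    pjV m hm x j < m := by
  cases j with
  | zero => exact hm
  | succ j => exact Nat.mod_lt _ hm

/-- The place value contributed by the bit `y`, read at position `i` of an input consisting of
blocks of length `l`, to the value `binVal` of block number `b`; it is `0` outside that block. -/
def blockContrib {B l : ℕ} (b : ℕ) (i : Fin (B * l)) (y : Bool) : ℕ :=
  if i.divNat = b ∧ y then 2 ^ (l - 1 - (i.modNat : ℕ)) else 0

theorem sum_blockContrib {B l : ℕ} (b : Fin B) (x : Fin (B * l) → Bool) :
    ∑ i, blockContrib b i (x i) = binVal l fun j => x (finProdFinEquiv (b, j)) := by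
  have divMod (p : Fin B × Fin l) :
      (finProdFinEquiv p).divNat = p.1 ∧ (finProdFinEquiv p).modNat = p.2 :=
    Prod.ext_iff.1 (finProdFinEquiv.symm_apply_apply p)
  rw [← finProdFinEquiv.sum_comp, Fintype.sum_prod_type, Finset.sum_eq_single b]
  · simp [blockContrib, binVal, divMod]
  · intro b' _ hne
    simp [blockContrib, divMod, Fin.val_ne_of_ne hne]
  · simp

theorem sum_blockContrib_pjBlock {m : ℕ} (hm : 0 < m) (x : Fin (2 * m * Nat.clog 2 m) → Bool)
    (side : Bool) (v : ℕ) :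
    ((∑ i, blockContrib (pjBlock m side v) i (x i) : ℕ) : ZMod m) = pjF m hm x side v := by
  rw [sum_blockContrib ⟨pjBlock m side v, pjBlock_lt hm side v⟩ x, pjF, ZMod.natCast_mod]
  congr! 4
  exact Fin.ext (by simp [add_comm, mul_comm])

/-- States of the pointer jumping program: the side (`A` or `B`) read last, the pointer followed in
the current layer, and the sum that becomes the next pointer. -/
abbrev PJState (m : ℕ) : Type := Bool × ZMod m × ZMod m

/-- Prepares a state for a layer on the given side. The layer has to begin with it whichever
variable comes first, so the recorded side tells whether this has happened already. -/
def PJState.load {m : ℕ} (side : Bool) (s : PJState m) : PJState m :=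
  if s.1 = side then s else (side, s.2.2, 0)

/-- Reading the bit `y` at position `i` in a layer on the given side. -/
def PJState.step {m : ℕ} (side : Bool) (i : Fin (2 * m * Nat.clog 2 m)) (s : PJState m) (y : Bool) :
    PJState m :=
  let s := s.load side
  (side, s.2.1, s.2.2 + (blockContrib (pjBlock m side s.2.1.val) i y : ℕ))

namespace PJState

variable {m : ℕ} (side : Bool)

theorem step_load (i : Fin (2 * m * Nat.clog 2 m)) (s : PJState m) (y : Bool) :
    (s.load side).step side i y = s.step side i y := by
  have load_load : (s.load side).load side = s.load side := by
    unfold load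
    split_ifs <;> simp_all
  simp only [step, load_load]

theorem step_comm (i i' : Fin (2 * m * Nat.clog 2 m)) (s : PJState m) (y y' : Bool) :
    (s.step side i y).step side i' y' = (s.step side i' y').step side i y := by
  simp [step, load, add_right_comm]

theorem foldl_step (x : Fin (2 * m * Nat.clog 2 m) → Bool) (v a : ZMod m)
    (l : List (Fin (2 * m * Nat.clog 2 m))) :
    l.foldl (fun s i => step side i s (x i)) (side, v, a) =
      (side, v, a + ((l.map fun i => blockContrib (pjBlock m side v.val) i (x i)).sum : ℕ)) := by
  induction l generalizing a with
  | nil => simp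
  | cons i l ih =>
    have step_eq : step side i (side, v, a) (x i) =
        (side, v, a + (blockContrib (pjBlock m side v.val) i (x i) : ℕ)) := by
      simp [step, load]
    rw [List.foldl_cons, step_eq, ih, List.map_cons, List.sum_cons, Nat.cast_add, add_assoc]

theorem foldl_step_of_ne (hm : 1 < m) (x : Fin (2 * m * Nat.clog 2 m) → Bool) (u : ZMod m)
    {v : ℕ} (hv : v < m) :
    (List.finRange (2 * m * Nat.clog 2 m)).foldl (fun s i => step side i s (x i))
        (!side, u, (v : ZMod m)) =
      (side, (v : ZMod m), (pjF m (by omega) x side v : ZMod m)) := by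
  have hl : 0 < Nat.clog 2 m := Nat.clog_pos one_lt_two hm
  have hn : 2 * m * Nat.clog 2 m ≠ 0 := by positivity
  obtain ⟨i, l, hil⟩ := List.exists_cons_of_ne_nil (mt List.finRange_eq_nil_iff.1 hn)
  have load_first :
      (List.finRange (2 * m * Nat.clog 2 m)).foldl (fun s i => step side i s (x i))
          (!side, u, (v : ZMod m)) =
        (List.finRange (2 * m * Nat.clog 2 m)).foldl (fun s i => step side i s (x i))
          (side, (v : ZMod m), 0) := by
    rw [hil, List.foldl_cons, List.foldl_cons, ← step_load]
    simp [load]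
  rw [load_first, foldl_step, ZMod.val_natCast_of_lt hv, ← Fin.sum_univ_def,
    sum_blockContrib_pjBlock, zero_add]

/-- The side component is the side of layer `j - 1`; for `j = 0` this is the side `B`, so that layer
`0` on side `A` loads its pointer. -/
theorem foldl_layers (hm : 1 < m) (x : Fin (2 * m * Nat.clog 2 m) → Bool) (j : ℕ) :
    ∃ u : ZMod m, (List.finRange j).foldl (fun s (t : Fin j) =>
        (List.finRange (2 * m * Nat.clog 2 m)).foldl
          (fun s i => step (decide ((t : ℕ) % 2 = 1)) i s (x i)) s) (true, 0, 0) =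
      (!decide (j % 2 = 1), u, (pjV m (by omega) x j : ZMod m)) := by
  induction j with
  | zero => exact ⟨0, by simp [pjV]⟩
  | succ j ih =>
    obtain ⟨u, hu⟩ := ih
    refine ⟨pjV m (by omega) x j, ?_⟩
    have side_succ : (!decide ((j + 1) % 2 = 1)) = decide (j % 2 = 1) := by
      rw [← decide_not, decide_eq_decide]
      omega
    rw [List.finRange_succ_last, List.foldl_append, List.foldl_map, List.foldl_cons, List.foldl_nil]
    simp only [Fin.val_castSucc, Fin.val_last, hu, side_succ]
    exact foldl_step_of_ne _ hm x u (pjV_lt _ x j)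

end PJState

/-- The pointer jumping program: layer `t` computes `v_{t+1}` from `v_t`. -/
noncomputable def pjKOBDD (j m : ℕ) [NeZero m] : KOBDD j (2 * m * Nat.clog 2 m) (2 * m ^ 2) :=
  KOBDD.ofEquiv
    (Fintype.equivFinOfCardEq (by simp [sq] : Fintype.card (PJState m) = 2 * m ^ 2))
    (Equiv.refl _) (fun t => PJState.step (decide ((t : ℕ) % 2 = 1))) (true, 0, 0)
    {s | (Nat.digits 2 s.2.2.val).sum % 2 = 1}

theorem pjKOBDD_commutative (j m : ℕ) [NeZero m] : (pjKOBDD j m).Commutative :=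
  KOBDD.commutative_of_tr_comm fun t i i' s b b' _ => by
    simp [pjKOBDD, KOBDD.ofEquiv, PJState.step_comm _ i i']

theorem pjKOBDD_represents (j : ℕ) {m : ℕ} [NeZero m] (hm : 1 < m) :
    (pjKOBDD j m).Represents (PJ j m (NeZero.pos m)) := by
  intro x
  obtain ⟨u, hu⟩ := PJState.foldl_layers hm x j
  rw [pjKOBDD, KOBDD.ofEquiv_accepts]
  simp only [Equiv.refl_apply, hu]
  simp [PJ, ZMod.val_natCast_of_lt (pjV_lt _ x j)]

end PointerJumping

theorem stmt18_general {j t m : ℕ} (hjt : j ≤ t) (hm : 2 ≤ m) :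
    ∃ g : (Fin (2 * m * Nat.clog 2 m * (Nat.clog 2 (2 * m * Nat.clog 2 m) + 1)) → Bool) → Bool,
      (∀ x b, ordF (2 * m * Nat.clog 2 m) (PJ j m (by omega)) x = some b → g x = b) ∧
      ∃ W : ℕ, W ≤ 4 * m ^ 2 * (2 * m * Nat.clog 2 m) ∧
        ∃ M : KOBDD t (2 * m * Nat.clog 2 m * (Nat.clog 2 (2 * m * Nat.clog 2 m) + 1)) W,
          M.Represents g := by
  have : NeZero m := ⟨by omega⟩
  obtain ⟨r, rfl⟩ := Nat.exists_eq_add_of_le hjt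
  have hn : 1 < 2 * m * Nat.clog 2 m := by
    have := Nat.clog_pos one_lt_two hm
    nlinarith
  obtain ⟨g, extends_ord, represents_g⟩ :=
    (((pjKOBDD_commutative j m).reorder_representsPartial (pjKOBDD_represents j hm)
      (Nat.clog 2 (2 * m * Nat.clog 2 m))).pad r).exists_represents
  refine ⟨g, extends_ord, _, ?_, _, represents_g⟩
  calc 2 * m ^ 2 * 2 ^ Nat.clog 2 (2 * m * Nat.clog 2 m)
      ≤ 2 * m ^ 2 * (2 * (2 * m * Nat.clog 2 m)) := Nat.mul_le_mul_left _ (two_pow_clog_le hn)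
    _ = 4 * m ^ 2 * (2 * m * Nat.clog 2 m) := by ring

/-- a total extension of `ord(PJ_{2k−1,m})` has a deterministic
2kOBDD of width `O(m²·n)`. -/
theorem stmt18 :
    ∃ c : ℕ, 0 < c ∧
      ∀ k m : ℕ, 1 ≤ k → ∀ hm : 2 ≤ m,
        ∃ g : (Fin (2 * m * Nat.clog 2 m * (Nat.clog 2 (2 * m * Nat.clog 2 m) + 1)) → Bool)
            → Bool,
          (∀ x b, ordF (2 * m * Nat.clog 2 m) (PJ (2 * k - 1) m (by omega)) x = some b →
              g x = b) ∧
          ∃ W : ℕ, W ≤ c * m ^ 2 * (2 * m * Nat.clog 2 m) ∧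
            ∃ M : KOBDD (2 * k)
                (2 * m * Nat.clog 2 m * (Nat.clog 2 (2 * m * Nat.clog 2 m) + 1)) W,
              M.Represents g := by
  exact ⟨4, four_pos, fun k _ _ hm => stmt18_general (Nat.sub_le (2 * k) 1) hm⟩
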